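/- If n + k is even and n > k ≥ 0 (i.e. n ≥ k + 2), then Pₙ(k) = Pₙ(k+1) and Pₙ(k) < P_m(k+1) for all m < n. -/

import Mathlib

/-!
Write `p n x = P(Sₙ = x)` (`prEq`) and `f n = Pₙ(k+1)`. Conditioning on one sign gives
`p (n+1) x = (p n (x+1) + p n (x-1)) / 2` and, for `k ≥ 0`,
`Pₙ₊₁(k+1) = Pₙ(k) + p n (k+1) + p n (k+2)`, while `Pₙ(k+1) = Pₙ(k) + 2 p n (k+1)`.
Since `p n x = 0` when `n + x` is odd, for `n + k` even this yields `Pₙ(k) = f n` and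
* `f (n+1) = f n + p n (k+2) ≥ f n`,
* `f (n+2) = f (n+1) - p (n+1) (k+1) = f n - (p n k - p n (k+2)) / 2`.

The law of `Sₙ` is strictly unimodal on its support (`prEq_step`), so `f` strictly decreases along
`k, k+2, k+4, …`; the intermediate values `f (k+2b+1)` are at least `f (k+2b)`, and `f m = 1 = f k`
for `m ≤ k`. Every `m < n` falls under one of these cases.
-/

/-- Probability of an event under the uniform distribution on sign vectors
`{-1,1}^n` (encoded as `Fin n → Bool`), which is the joint law of `n`
independent Rademacher random variables. -/
noncomputable def pr (n : ℕ) (E : (Fin n → Bool) → Prop) : ℝ :=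
  letI := Classical.decPred E
  ((Finset.univ.filter E).card : ℝ) / 2 ^ n

/-- `S n ε = ε₁ + ⋯ + εₙ`, the sum of `n` Rademacher variables. -/
def S (n : ℕ) (ε : Fin n → Bool) : ℤ := ∑ i, if ε i then 1 else -1

/-- `P n k = P(|Sₙ| ≤ k)` (with an integer threshold, so `P n (-1) = 0`). -/
noncomputable def P (n : ℕ) (k : ℤ) : ℝ := pr n fun ε => |S n ε| ≤ k

/-- `prEq n j = P(Sₙ = j)`. -/
noncomputable def prEq (n : ℕ) (j : ℤ) : ℝ := pr n fun ε => S n ε = j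

/-- `Pxi ξ n = P(|Sₙ| ≤ ξ·√n)`. -/
noncomputable def Pxi (ξ : ℝ) (n : ℕ) : ℝ :=
  pr n fun ε => (|S n ε| : ℝ) ≤ ξ * Real.sqrt n

/-- `nseq ξ k = nₖ = 2·⌈(k²/ξ² + k)/2⌉ − k − 1`. -/
noncomputable def nseq (ξ : ℝ) (k : ℕ) : ℤ :=
  2 * ⌈((k : ℝ) ^ 2 / ξ ^ 2 + (k : ℝ)) / 2⌉ - k - 1

open Classical in
lemma pr_eq_sum (n : ℕ) (E : (Fin n → Bool) → Prop) :
    pr n E = (∑ ε, if E ε then (1 : ℝ) else 0) / 2 ^ n := by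
  simp only [pr, Finset.sum_boole]

lemma pr_nonneg (n : ℕ) (E : (Fin n → Bool) → Prop) : 0 ≤ pr n E := by
  unfold pr; positivity

lemma pr_congr {n : ℕ} {E F : (Fin n → Bool) → Prop} (h : ∀ ε, E ε ↔ F ε) : pr n E = pr n F := by
  rw [show E = F from funext fun ε => propext (h ε)]

lemma pr_true (n : ℕ) {E : (Fin n → Bool) → Prop} (h : ∀ ε, E ε) : pr n E = 1 := by
  classical
  rw [pr_eq_sum]
  simp [h]

lemma pr_false (n : ℕ) {E : (Fin n → Bool) → Prop} (h : ∀ ε, ¬ E ε) : pr n E = 0 := by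
  classical
  rw [pr_eq_sum]
  simp [h]

lemma pr_add {n : ℕ} {E F G : (Fin n → Bool) → Prop} (h : ∀ ε, E ε ↔ F ε ∨ G ε)
    (hd : ∀ ε, F ε → ¬ G ε) : pr n E = pr n F + pr n G := by
  classical
  rw [pr_eq_sum, pr_eq_sum, pr_eq_sum, ← add_div, ← Finset.sum_add_distrib]
  congr 1
  refine Finset.sum_congr rfl fun ε _ => ?_
  have h1 := h ε
  have h2 := hd ε
  by_cases hF : F ε <;> by_cases hG : G ε <;> simp_all

/-- Conditioning on the first sign, for events that depend only on the sum. -/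
lemma pr_succ (n : ℕ) (A : ℤ → Prop) :
    pr (n + 1) (fun ε => A (S (n + 1) ε)) =
      (pr n (fun ε => A (S n ε + 1)) + pr n (fun ε => A (S n ε - 1))) / 2 := by
  classical
  rw [pr_eq_sum, pr_eq_sum, pr_eq_sum, ← (Fin.consEquiv (fun _ => Bool)).sum_comp,
    Fintype.sum_prod_type, Fintype.sum_bool]
  have h1 : ∀ ε : Fin n → Bool, S (n + 1) (Fin.cons true ε) = S n ε + 1 := by
    intro ε; simp [S, Fin.sum_univ_succ]; ring
  have h2 : ∀ ε : Fin n → Bool, S (n + 1) (Fin.cons false ε) = S n ε - 1 := by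
    intro ε; simp [S, Fin.sum_univ_succ]; ring
  have hc : ∀ p : Bool × (Fin n → Bool),
      Fin.consEquiv (fun _ => Bool) p = Fin.cons p.1 p.2 := fun _ => rfl
  simp only [hc, h1, h2]
  rw [pow_succ]
  field_simp

lemma prEq_succ (n : ℕ) (x : ℤ) :
    prEq (n + 1) x = (prEq n (x - 1) + prEq n (x + 1)) / 2 := by
  unfold prEq
  rw [pr_succ n (fun s => s = x)]
  congr 2 <;> exact pr_congr fun ε => by omega

lemma prEq_zero (x : ℤ) : prEq 0 x = if x = 0 then 1 else 0 := by
  unfold prEq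
  split_ifs with h
  · exact pr_true 0 fun ε => by simp [S, h]
  · exact pr_false 0 fun ε => by simpa [S] using Ne.symm h

lemma prEq_nonneg (n : ℕ) (x : ℤ) : 0 ≤ prEq n x := pr_nonneg _ _

lemma prEq_neg (n : ℕ) : ∀ x : ℤ, prEq n (-x) = prEq n x := by
  induction n with
  | zero => intro x; simp [prEq_zero]
  | succ n ih =>
    intro x
    rw [prEq_succ, prEq_succ, ← ih (x - 1), ← ih (x + 1), add_comm,
      show -x + 1 = -(x - 1) by ring, show -x - 1 = -(x + 1) by ring]

lemma prEq_odd (n : ℕ) : ∀ x : ℤ, Odd (n + x) → prEq n x = 0 := by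
  induction n with
  | zero =>
    intro x hx
    rw [prEq_zero, if_neg]
    rintro rfl
    simp at hx
  | succ n ih =>
    intro x hx
    rw [Int.odd_iff] at hx
    push_cast at hx
    rw [prEq_succ, ih, ih, add_zero, zero_div] <;> rw [Int.odd_iff] <;> omega

/-- Unimodality of the law of `Sₙ`, strict on its support. The induction on `n` is on the two
differences `p n (x-1) - p n (x+1)` and `p n (x+1) - p n (x+3)`; at `x = 0` the first vanishes by
symmetry and the second carries the strictness. -/
lemma prEq_step (n : ℕ) : ∀ x : ℕ, prEq n ((x : ℤ) + 2) ≤ prEq n x ∧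
    (Even (n + x) → x ≤ n → prEq n ((x : ℤ) + 2) < prEq n x) := by
  induction n with
  | zero =>
    intro x
    rw [prEq_zero, prEq_zero, if_neg (by omega)]
    refine ⟨by split_ifs <;> norm_num, fun _ hx => ?_⟩
    rw [if_pos (by omega)]
    norm_num
  | succ n ih =>
    intro x
    obtain ⟨h1, h1'⟩ := ih (x + 1)
    rw [prEq_succ, prEq_succ]
    push_cast at h1 h1'
    rw [show (x : ℤ) + 2 - 1 = x + 1 by ring, show (x : ℤ) + 2 + 1 = x + 1 + 2 by ring]
    rcases x with _ | y
    · have hs := prEq_neg n 1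
      norm_num at *
      refine ⟨by linarith, fun he => ?_⟩
      have := h1' he (by
        rw [Nat.even_iff] at he
        omega)
      linarith
    · obtain ⟨h0, h0'⟩ := ih y
      push_cast at *
      rw [show (y : ℤ) + 1 - 1 = y by ring, show (y : ℤ) + 1 + 1 = y + 2 by ring] at *
      refine ⟨by linarith, fun he hy => ?_⟩
      have := h0' (by rw [Nat.even_iff] at *; omega) (by omega)
      linarith

lemma P_add_one (n k : ℕ) : P n ((k : ℤ) + 1) = P n k + 2 * prEq n ((k : ℤ) + 1) := by
  have h := prEq_neg n ((k : ℤ) + 1)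
  have e1 : P n ((k : ℤ) + 1) = P n k +
      pr n (fun ε => S n ε = (k : ℤ) + 1 ∨ S n ε = -((k : ℤ) + 1)) :=
    pr_add (fun ε => by simp only [abs_le]; omega) (fun ε => by simp only [abs_le]; omega)
  have e2 : pr n (fun ε => S n ε = (k : ℤ) + 1 ∨ S n ε = -((k : ℤ) + 1)) =
      prEq n ((k : ℤ) + 1) + prEq n (-((k : ℤ) + 1)) :=
    pr_add (fun ε => Iff.rfl) (fun ε => by omega)
  linarith

lemma P_succ (n k : ℕ) :
    P (n + 1) ((k : ℤ) + 1) = P n k + prEq n ((k : ℤ) + 1) + prEq n ((k : ℤ) + 2) := by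
  have h1 := prEq_neg n ((k : ℤ) + 1)
  have h2 := prEq_neg n ((k : ℤ) + 2)
  have e0 : P (n + 1) ((k : ℤ) + 1) = (pr n (fun ε => |S n ε + 1| ≤ (k : ℤ) + 1) +
      pr n (fun ε => |S n ε - 1| ≤ (k : ℤ) + 1)) / 2 :=
    pr_succ n (fun s => |s| ≤ (k : ℤ) + 1)
  have e1 : pr n (fun ε => |S n ε + 1| ≤ (k : ℤ) + 1) = P n k +
      pr n (fun ε => S n ε = -((k : ℤ) + 1) ∨ S n ε = -((k : ℤ) + 2)) :=
    pr_add (fun ε => by simp only [abs_le]; omega) (fun ε => by simp only [abs_le]; omega)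
  have e2 : pr n (fun ε => |S n ε - 1| ≤ (k : ℤ) + 1) = P n k +
      pr n (fun ε => S n ε = (k : ℤ) + 1 ∨ S n ε = (k : ℤ) + 2) :=
    pr_add (fun ε => by simp only [abs_le]; omega) (fun ε => by simp only [abs_le]; omega)
  have e3 : pr n (fun ε => S n ε = -((k : ℤ) + 1) ∨ S n ε = -((k : ℤ) + 2)) =
      prEq n (-((k : ℤ) + 1)) + prEq n (-((k : ℤ) + 2)) :=
    pr_add (fun ε => Iff.rfl) (fun ε => by omega)
  have e4 : pr n (fun ε => S n ε = (k : ℤ) + 1 ∨ S n ε = (k : ℤ) + 2) =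
      prEq n ((k : ℤ) + 1) + prEq n ((k : ℤ) + 2) :=
    pr_add (fun ε => Iff.rfl) (fun ε => by omega)
  linarith

lemma P_eq_one {m k : ℕ} (h : m ≤ k) : P m ((k : ℤ) + 1) = 1 := by
  refine pr_true m fun ε => ?_
  have : |S m ε| ≤ m := by
    unfold S
    refine (Finset.abs_sum_le_sum_abs _ _).trans ?_
    have h1 : ∀ i, |(if ε i then (1 : ℤ) else -1)| = 1 := fun i => by split_ifs <;> simp
    simp [h1]
  omega

lemma P_eq_of_even {n k : ℕ} (h : Even (n + k)) : P n (k : ℤ) = P n ((k : ℤ) + 1) := by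
  rw [P_add_one, prEq_odd n _ (by rw [Int.odd_iff]; rw [Nat.even_iff] at h; omega)]
  ring

lemma P_le_succ {n k : ℕ} (h : Even (n + k)) : P n ((k : ℤ) + 1) ≤ P (n + 1) ((k : ℤ) + 1) := by
  rw [P_succ, ← P_eq_of_even h]
  linarith [prEq_nonneg n ((k : ℤ) + 1), prEq_nonneg n ((k : ℤ) + 2)]

lemma P_add_two_lt {n k : ℕ} (h : Even (n + k)) (hk : k ≤ n) :
    P (n + 2) ((k : ℤ) + 1) < P n ((k : ℤ) + 1) := by
  have e1 := P_succ (n + 1) k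
  have e2 := P_add_one (n + 1) k
  have e3 := P_succ n k
  have e4 := P_add_one n k
  have e5 := prEq_succ n ((k : ℤ) + 1)
  rw [show (k : ℤ) + 1 - 1 = k by ring, show (k : ℤ) + 1 + 1 = k + 2 by ring] at e5
  have z1 : prEq n ((k : ℤ) + 1) = 0 :=
    prEq_odd n _ (by rw [Int.odd_iff]; rw [Nat.even_iff] at h; omega)
  have z2 : prEq (n + 1) ((k : ℤ) + 2) = 0 :=
    prEq_odd _ _ (by rw [Int.odd_iff]; rw [Nat.even_iff] at h; push_cast; omega)
  have := (prEq_step n k).2 h hk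
  rw [show n + 1 + 1 = n + 2 from rfl] at e1
  linarith

/-- if `n + k` is even and `n > k ≥ 0`, then `Pₙ(k) = Pₙ(k+1)` and
`Pₙ(k) < P_m(k+1)` for all `m < n`. -/
theorem stmt_12 (n k : ℕ) (h : Even (n + k)) (hkn : k < n) :
    P n (k : ℤ) = P n ((k : ℤ) + 1) ∧
    ∀ m : ℕ, m < n → P n (k : ℤ) < P m ((k : ℤ) + 1) := by
  refine ⟨P_eq_of_even h, fun m hm => ?_⟩
  rw [P_eq_of_even h]
  have anti : StrictAnti fun i : ℕ => P (k + 2 * i) ((k : ℤ) + 1) :=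
    strictAnti_nat_of_succ_lt fun i =>
      P_add_two_lt (n := k + 2 * i) (by rw [Nat.even_iff]; omega) (by omega)
  have key : ∀ a b : ℕ, b < a → P (k + 2 * a) ((k : ℤ) + 1) < P (k + 2 * b) ((k : ℤ) + 1) :=
    fun a b hab => anti hab
  rw [Nat.even_iff] at h
  obtain ⟨a, rfl⟩ : ∃ a, n = k + 2 * a := ⟨(n - k) / 2, by omega⟩
  rcases le_total m k with hmk | hmk
  · rw [P_eq_one hmk, ← P_eq_one (le_refl k)]
    exact key a 0 (by omega)
  · obtain ⟨b, rfl | rfl⟩ : ∃ b, m = k + 2 * b ∨ m = k + 2 * b + 1 := ⟨(m - k) / 2, by omega⟩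
    · exact key a b (by omega)
    · exact (key a b (by omega)).trans_le (P_le_succ (by rw [Nat.even_iff]; omega))
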